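/- Fix a real number q with 0 < q < 1 and a complex number t with |t| < 1. For all integers m, n ≥ 0, the Rogers polynomials of type A₁ satisfy the orthogonality and norm formula (1/2π) ∫₀^{2π} P_m(e^{iφ}; q, t) · P_n(e^{iφ}; q, t) · μ(e^{iφ}; q, t) dφ = δ_{mn} · ( ∏_{j=0}^{n−1} ((1 − q^{j+1})(1 − t² qʲ)) / ((1 − t q^{j+1})(1 − t qʲ)) ) · (1/2π) ∫₀^{2π} μ(e^{iφ}; q, t) dφ. (Formula (4.22) of the paper.) -/

import Mathlib

open scoped BigOperators
open Filter

noncomputable section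

/-- Symmetric monomial `M_r(X) = X^r + X^{-r}` for `r ≥ 1`, `M_0 = 1`. -/
def Msym (r : ℕ) (X : ℂ) : ℂ := if r = 0 then 1 else X ^ r + X⁻¹ ^ r

/-- Continuous q-Hermite Laurent polynomial (Macdonald polynomial of type A₁ at t = 0). -/
def PbarA1 (q : ℝ) (n : ℕ) (X : ℂ) : ℂ :=
  Msym n X + ∑ j ∈ Finset.Icc 1 (n / 2),
    (∏ i ∈ Finset.range j, (1 - (q : ℂ) ^ (n - i)) / (1 - (q : ℂ) ^ (i + 1))) *
      Msym (n - 2 * j) X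

/-- Global q-Whittaker function of type A₁. -/
def whitA1 (q : ℝ) (X Λ : ℂ) : ℂ :=
  ∑' n : ℕ, ((q ^ ((n : ℝ) ^ 2 / 4) : ℝ) : ℂ) * X ^ n * PbarA1 q n Λ /
    ∏ j ∈ Finset.Icc 1 n, (1 - (q : ℂ) ^ j)

/-- Theta function `θ(Λ) = ∑_{j ∈ ℤ} q^{j²/4} Λ^j`. -/
def thetaA1 (q : ℝ) (Λ : ℂ) : ℂ :=
  ∑' j : ℤ, ((q ^ ((j : ℝ) ^ 2 / 4) : ℝ) : ℂ) * Λ ^ j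

/-- Rogers Laurent polynomial (symmetric Macdonald polynomial of type A₁). -/
def RogersA1 (q : ℝ) (t : ℂ) (n : ℕ) (X : ℂ) : ℂ :=
  Msym n X + ∑ j ∈ Finset.Icc 1 (n / 2),
    (∏ i ∈ Finset.range j,
      ((1 - (q : ℂ) ^ (n - i)) * (1 - t * (q : ℂ) ^ i)) /
      ((1 - (q : ℂ) ^ (1 + i)) * (1 - t * (q : ℂ) ^ (n - i - 1)))) *
    Msym (n - 2 * j) X

/-- Global q,t-spherical function of type A₁, with `t = s²`. -/
def sphA1 (q s : ℝ) (X Λ : ℂ) : ℂ :=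
  ∑' n : ℕ, (s : ℂ) ^ n * ((q ^ ((n : ℝ) ^ 2 / 4) : ℝ) : ℂ) *
    RogersA1 q ((s : ℂ) ^ 2) n X * RogersA1 q ((s : ℂ) ^ 2) n Λ *
    ∏ i ∈ Finset.range n,
      ((1 - (s : ℂ) ^ 2 * (q : ℂ) ^ i) * (1 - (s : ℂ) ^ 2 * (q : ℂ) ^ (i + 1))) /
      ((1 - ((s : ℂ) ^ 2) ^ 2 * (q : ℂ) ^ i) * (1 - (q : ℂ) ^ (i + 1)))

/-- Macdonald truncated theta weight function of type A₁. -/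
def muA1 (q : ℝ) (t : ℂ) (X : ℂ) : ℂ :=
  ∏' j : ℕ, ((1 - X ^ 2 * (q : ℂ) ^ j) * (1 - X⁻¹ ^ 2 * (q : ℂ) ^ (j + 1))) /
    ((1 - t * X ^ 2 * (q : ℂ) ^ j) * (1 - t * X⁻¹ ^ 2 * (q : ℂ) ^ (j + 1)))

/-- The coefficients `(t; q)_k / (q; q)_k` of the `q`-binomial series. -/
def qBinomCoeff (q t : ℂ) (k : ℕ) : ℂ :=
  ∏ i ∈ Finset.range k, (1 - t * q ^ i) / (1 - q ^ (i + 1))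

/-- The Rogers polynomial in the normalization `∑ (t; q)_k (t; q)_{n-k} / ((q; q)_k (q; q)_{n-k})`. -/
def rogersC (q t : ℂ) (n : ℕ) (X : ℂ) : ℂ :=
  ∑ k ∈ Finset.range (n + 1), qBinomCoeff q t k * qBinomCoeff q t (n - k) * (X ^ (n - k) * X⁻¹ ^ k)

lemma one_sub_ne_zero_of_norm_lt_one {z : ℂ} (hz : ‖z‖ < 1) : 1 - z ≠ 0 := by
  intro h
  rw [← sub_eq_zero.mp h] at hz
  simp at hz

lemma norm_mul_pow_lt_one {q z : ℂ} (hq : ‖q‖ < 1) (hz : ‖z‖ < 1) (k : ℕ) : ‖z * q ^ k‖ < 1 := by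
  rw [norm_mul, norm_pow]
  exact (mul_le_of_le_one_right (norm_nonneg _)
    (pow_le_one₀ (norm_nonneg _) hq.le)).trans_lt hz

lemma one_sub_mul_pow_ne_zero {q z : ℂ} (hq : ‖q‖ < 1) (hz : ‖z‖ < 1) (k : ℕ) :
    1 - z * q ^ k ≠ 0 :=
  one_sub_ne_zero_of_norm_lt_one (norm_mul_pow_lt_one hq hz k)

lemma one_sub_pow_succ_ne_zero {q : ℂ} (hq : ‖q‖ < 1) (k : ℕ) : 1 - q ^ (k + 1) ≠ 0 := by
  rw [pow_succ']
  exact one_sub_mul_pow_ne_zero hq hq k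

lemma qBinomCoeff_zero (q t : ℂ) : qBinomCoeff q t 0 = 1 := by simp [qBinomCoeff]

lemma qBinomCoeff_succ {q : ℂ} (t : ℂ) (hq : ‖q‖ < 1) (k : ℕ) :
    (1 - q ^ (k + 1)) * qBinomCoeff q t (k + 1) = (1 - t * q ^ k) * qBinomCoeff q t k := by
  have := one_sub_pow_succ_ne_zero hq k
  rw [qBinomCoeff, Finset.prod_range_succ, ← qBinomCoeff]
  field_simp

lemma qBinomCoeff_ne_zero {q t : ℂ} (hq : ‖q‖ < 1) (ht : ‖t‖ < 1) (k : ℕ) :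
    qBinomCoeff q t k ≠ 0 :=
  Finset.prod_ne_zero_iff.mpr fun i _ ↦
    div_ne_zero (one_sub_mul_pow_ne_zero hq ht i) (one_sub_pow_succ_ne_zero hq i)

lemma prod_mul_qBinomCoeff {q t : ℂ} (hq : ‖q‖ < 1) (ht : ‖t‖ < 1) {n j : ℕ} (hj : j ≤ n) :
    (∏ i ∈ Finset.range j, ((1 - q ^ (n - i)) * (1 - t * q ^ i)) /
      ((1 - q ^ (1 + i)) * (1 - t * q ^ (n - i - 1)))) * qBinomCoeff q t n =
    qBinomCoeff q t j * qBinomCoeff q t (n - j) := by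
  induction j with
  | zero => simp [qBinomCoeff_zero]
  | succ j ih =>
    obtain ⟨l, rfl⟩ : ∃ l, n = l + (j + 1) := ⟨n - (j + 1), by omega⟩
    have e₁ : l + (j + 1) - j = l + 1 := by omega
    have e₂ : l + (j + 1) - (j + 1) = l := by omega
    have h₁ := one_sub_pow_succ_ne_zero hq j
    have h₂ := one_sub_mul_pow_ne_zero hq ht l
    have s₁ := qBinomCoeff_succ t hq j
    have s₂ := qBinomCoeff_succ t hq l
    have ih := ih (by omega)
    rw [Finset.prod_range_succ, mul_right_comm, ih, e₁, e₂, Nat.add_sub_cancel, add_comm 1 j,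
      mul_div_assoc', div_eq_iff (mul_ne_zero h₁ h₂)]
    linear_combination qBinomCoeff q t j * (1 - t * q ^ j) * s₂ -
      qBinomCoeff q t l * (1 - t * q ^ l) * s₁

lemma sum_range_fold {M : Type*} [AddCommMonoid M] (n : ℕ) : ∀ F : ℕ → M,
    ∑ j ∈ Finset.range (n / 2 + 1), (if n - 2 * j = 0 then F j else F j + F (n - j)) =
      ∑ k ∈ Finset.range (n + 1), F k := by
  induction n using Nat.twoStepInduction with
  | zero => simp
  | one => simp [Finset.sum_range_succ]
  | more n ih _ =>
    intro F
    rw [show (n + 2) / 2 = n / 2 + 1 by omega, Finset.sum_range_succ',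
      Finset.sum_range_succ _ (n + 2), Finset.sum_range_succ' _ (n + 1), ← ih fun k ↦ F (k + 1)]
    rw [add_assoc (∑ j ∈ _, _)]
    refine congrArg₂ (· + ·) (Finset.sum_congr rfl fun j hj ↦ ?_) (by simp)
    rw [Finset.mem_range] at hj
    rw [show n + 2 - 2 * (j + 1) = n - 2 * j by omega,
      show n + 2 - (j + 1) = n - j + 1 by omega]

lemma RogersA1_mul_qBinomCoeff {q : ℝ} {t X : ℂ} (hq : ‖(q : ℂ)‖ < 1) (ht : ‖t‖ < 1) (hX : X ≠ 0)
    (n : ℕ) : RogersA1 q t n X * qBinomCoeff q t n = rogersC q t n X := by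
  have h : RogersA1 q t n X = ∑ j ∈ Finset.range (n / 2 + 1), (∏ i ∈ Finset.range j,
      ((1 - (q : ℂ) ^ (n - i)) * (1 - t * (q : ℂ) ^ i)) /
      ((1 - (q : ℂ) ^ (1 + i)) * (1 - t * (q : ℂ) ^ (n - i - 1)))) * Msym (n - 2 * j) X := by
    rw [Finset.sum_range_succ', RogersA1, add_comm, Finset.range_eq_Ico,
      Finset.sum_Ico_add' (fun j ↦ (∏ i ∈ Finset.range j,
        ((1 - (q : ℂ) ^ (n - i)) * (1 - t * (q : ℂ) ^ i)) /
        ((1 - (q : ℂ) ^ (1 + i)) * (1 - t * (q : ℂ) ^ (n - i - 1)))) * Msym (n - 2 * j) X)]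
    simp [Finset.Ico_add_one_right_eq_Icc]
  rw [h, rogersC, Finset.sum_mul]
  refine Eq.trans (Finset.sum_congr rfl fun j hj ↦ ?_) (sum_range_fold n _)
  rw [Finset.mem_range] at hj
  obtain ⟨d, rfl⟩ : ∃ d, n = 2 * j + d := ⟨n - 2 * j, by omega⟩
  rw [mul_right_comm, prod_mul_qBinomCoeff hq ht (by omega), Msym]
  have hXj : X ^ j * X⁻¹ ^ j = 1 := by rw [← mul_pow, mul_inv_cancel₀ hX, one_pow]
  have e₁ : 2 * j + d - j = j + d := by omega
  have e₂ : 2 * j + d - 2 * j = d := by omega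
  have e₃ : 2 * j + d - (j + d) = j := by omega
  rw [e₁, e₂, e₃]
  split_ifs with h0
  · subst h0
    simp only [add_zero, hXj]
  · rw [pow_add, pow_add]
    linear_combination -(qBinomCoeff q t j * qBinomCoeff q t (j + d) * (X ^ d + X⁻¹ ^ d)) * hXj

lemma rogersC_inv (q t : ℂ) (n : ℕ) (X : ℂ) : rogersC q t n X⁻¹ = rogersC q t n X := by
  rw [rogersC, rogersC, ← Finset.sum_range_reflect]
  refine Finset.sum_congr rfl fun k hk ↦ ?_
  rw [Finset.mem_range] at hk
  rw [show n + 1 - 1 - k = n - k by omega, show n - (n - k) = k by omega, inv_inv]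
  ring

section Recurrence

open PowerSeries

lemma mk_rogersC (q t X : ℂ) : PowerSeries.mk (fun n ↦ rogersC q t n X) =
    PowerSeries.mk (fun k ↦ qBinomCoeff q t k * X⁻¹ ^ k) *
      PowerSeries.mk (fun k ↦ qBinomCoeff q t k * X ^ k) := by
  ext n
  rw [coeff_mul, Finset.Nat.sum_antidiagonal_eq_sum_range_succ_mk, coeff_mk, rogersC]
  refine Finset.sum_congr rfl fun k _ ↦ ?_
  simp only [coeff_mk]
  ring

lemma mk_pow_mul_rogersC (q t X : ℂ) : PowerSeries.mk (fun n ↦ q ^ n * rogersC q t n X) =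
    PowerSeries.mk (fun k ↦ q ^ k * (qBinomCoeff q t k * X⁻¹ ^ k)) *
      PowerSeries.mk (fun k ↦ q ^ k * (qBinomCoeff q t k * X ^ k)) := by
  ext n
  rw [coeff_mul, Finset.Nat.sum_antidiagonal_eq_sum_range_succ_mk, coeff_mk, rogersC,
    Finset.mul_sum]
  refine Finset.sum_congr rfl fun k hk ↦ ?_
  rw [Finset.mem_range] at hk
  simp only [coeff_mk]
  rw [show q ^ n = q ^ k * q ^ (n - k) by rw [← pow_add]; congr 1; omega]
  ring

lemma qBinom_series_functional {q : ℂ} (t : ℂ) (hq : ‖q‖ < 1) (X : ℂ) :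
    (1 - C X * PowerSeries.X) * PowerSeries.mk (fun k ↦ qBinomCoeff q t k * X ^ k) =
    (1 - C (t * X) * PowerSeries.X) *
      PowerSeries.mk (fun k ↦ q ^ k * (qBinomCoeff q t k * X ^ k)) := by
  ext n
  rw [sub_mul, sub_mul, one_mul, one_mul, mul_assoc, mul_assoc, map_sub, map_sub,
    coeff_C_mul, coeff_C_mul]
  cases n with
  | zero => simp
  | succ n =>
    rw [coeff_succ_X_mul, coeff_succ_X_mul]
    simp only [coeff_mk]
    linear_combination X ^ (n + 1) * qBinomCoeff_succ t hq n

lemma rogersC_series_functional {q X : ℂ} (t : ℂ) (hq : ‖q‖ < 1) (hX : X ≠ 0) :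
    (1 - C (X + X⁻¹) * PowerSeries.X + PowerSeries.X * PowerSeries.X) *
      PowerSeries.mk (fun n ↦ rogersC q t n X) =
    (1 - C (t * (X + X⁻¹)) * PowerSeries.X + C (t ^ 2) * (PowerSeries.X * PowerSeries.X)) *
      PowerSeries.mk (fun n ↦ q ^ n * rogersC q t n X) := by
  have h₁ := qBinom_series_functional t hq X
  have h₂ := qBinom_series_functional t hq X⁻¹
  have hC : C X * C X⁻¹ = (1 : PowerSeries ℂ) := by rw [← map_mul, mul_inv_cancel₀ hX, map_one]
  rw [mk_rogersC, mk_pow_mul_rogersC]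
  have h := congrArg₂ (· * ·) h₁ h₂
  simp only [map_mul, map_add, map_pow] at h ⊢
  generalize PowerSeries.mk (fun k ↦ qBinomCoeff q t k * X ^ k) = A at *
  generalize PowerSeries.mk (fun k ↦ qBinomCoeff q t k * X⁻¹ ^ k) = B at *
  generalize PowerSeries.mk (fun k ↦ q ^ k * (qBinomCoeff q t k * X ^ k)) = A' at *
  generalize PowerSeries.mk (fun k ↦ q ^ k * (qBinomCoeff q t k * X⁻¹ ^ k)) = B' at *
  linear_combination h + (C t ^ 2 * PowerSeries.X ^ 2 * A' * B' - PowerSeries.X ^ 2 * A * B) * hC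

lemma rogersC_zero (q t X : ℂ) : rogersC q t 0 X = 1 := by simp [rogersC, qBinomCoeff_zero]

lemma rogersC_one_rec {q X : ℂ} (t : ℂ) (hq : ‖q‖ < 1) :
    (1 - q) * rogersC q t 1 X = (1 - t) * (X + X⁻¹) * rogersC q t 0 X := by
  have := qBinomCoeff_succ t hq 0
  simp only [rogersC, qBinomCoeff_zero, Finset.sum_range_succ, Finset.sum_range_zero] at this ⊢
  simp [qBinomCoeff_zero] at this ⊢
  linear_combination (X + X⁻¹) * this

/-- The three-term recurrence of the Rogers polynomials. -/
lemma rogersC_add_two_rec {q X : ℂ} (t : ℂ) (hq : ‖q‖ < 1) (hX : X ≠ 0) (n : ℕ) :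
    (1 - q ^ (n + 2)) * rogersC q t (n + 2) X =
      (1 - t * q ^ (n + 1)) * (X + X⁻¹) * rogersC q t (n + 1) X -
        (1 - t ^ 2 * q ^ n) * rogersC q t n X := by
  have h := congrArg (coeff (n + 2)) (rogersC_series_functional t hq hX)
  simp only [add_mul, sub_mul, one_mul, mul_assoc, map_add, map_sub, coeff_C_mul,
    coeff_succ_X_mul, coeff_mk] at h
  linear_combination h

end Recurrence

/-- The Rogers polynomials are eigenfunctions of the Macdonald `q`-difference operator. -/
lemma rogersC_eigen {p q X : ℂ} (t : ℂ) (hp : p ≠ 0) (hpq : p ^ 2 = q) (hq : ‖q‖ < 1) (hX : X ≠ 0)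
    (n : ℕ) :
    (1 - X⁻¹ ^ 2) * (1 - t * X ^ 2) * rogersC q t n (p * X) +
      (1 - X ^ 2) * (1 - t * X⁻¹ ^ 2) * rogersC q t n (X / p) =
    (t * p ^ n + p⁻¹ ^ n) * ((1 - X ^ 2) * (1 - X⁻¹ ^ 2) * rogersC q t n X) := by
  let A : ℕ → ℂ := fun k ↦ (1 - q ^ k) * (1 - t * q ^ (n - k)) *
    (qBinomCoeff q t k * qBinomCoeff q t (n - k) * (X ^ (n - k) * X⁻¹ ^ k))
  let B : ℕ → ℂ := fun k ↦ (1 - q ^ (n - k)) * (1 - t * q ^ k) *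
    (qBinomCoeff q t k * qBinomCoeff q t (n - k) * (X ^ (n - k) * X⁻¹ ^ k)) * X⁻¹ ^ 2
  have hAB : ∑ k ∈ Finset.range (n + 1), A k = ∑ k ∈ Finset.range (n + 1), B k := by
    rw [Finset.sum_range_succ', Finset.sum_range_succ B]
    have hA : A 0 = 0 := by simp [A]
    have hB : B n = 0 := by simp [B]
    rw [hA, hB]
    congr 1
    refine Finset.sum_congr rfl fun k hk ↦ ?_
    rw [Finset.mem_range] at hk
    obtain ⟨e, rfl⟩ : ∃ e, n = k + 1 + e := ⟨n - (k + 1), by omega⟩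
    simp only [A, B]
    rw [show k + 1 + e - (k + 1) = e by omega, show k + 1 + e - k = e + 1 by omega]
    have s₁ := qBinomCoeff_succ t hq k
    have s₂ := qBinomCoeff_succ t hq e
    have hXX : X * X⁻¹ = 1 := mul_inv_cancel₀ hX
    linear_combination (1 - t * q ^ e) * qBinomCoeff q t e * (X ^ e * X⁻¹ ^ (k + 1)) * s₁ -
      (1 - t * q ^ k) * qBinomCoeff q t k * X ^ (e + 1) * X⁻¹ ^ (k + 2) * s₂ -
      (1 - t * q ^ e) * qBinomCoeff q t e * (1 - t * q ^ k) * qBinomCoeff q t k *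
        X ^ e * X⁻¹ ^ (k + 1) * hXX
  have key : (1 - X⁻¹ ^ 2) * (1 - t * X ^ 2) * rogersC q t n (p * X) +
      (1 - X ^ 2) * (1 - t * X⁻¹ ^ 2) * rogersC q t n (X / p) -
      (t * p ^ n + p⁻¹ ^ n) * ((1 - X ^ 2) * (1 - X⁻¹ ^ 2) * rogersC q t n X) =
      -p⁻¹ ^ n * (1 - X ^ 2) *
        (∑ k ∈ Finset.range (n + 1), A k - ∑ k ∈ Finset.range (n + 1), B k) := by
    simp only [rogersC, ← Finset.sum_sub_distrib, Finset.mul_sum, ← Finset.sum_add_distrib]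
    refine Finset.sum_congr rfl fun k hk ↦ ?_
    rw [Finset.mem_range] at hk
    obtain ⟨e, rfl⟩ : ∃ e, n = k + e := ⟨n - k, by omega⟩
    simp only [A, B]
    rw [Nat.add_sub_cancel_left, ← hpq, div_eq_mul_inv, mul_inv, mul_inv, inv_inv]
    generalize qBinomCoeff (p ^ 2) t k = g
    generalize qBinomCoeff (p ^ 2) t e = g'
    simp only [mul_pow, inv_pow]
    field_simp
    ring
  rw [hAB, sub_self, mul_zero, sub_eq_zero] at key
  exact key

section Weight

/-- The infinite `q`-Pochhammer symbol `(z; q)_∞`. -/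
def qPochInf (q z : ℂ) : ℂ := ∏' j : ℕ, (1 - z * q ^ j)

lemma summable_norm_mul_pow {q : ℂ} (hq : ‖q‖ < 1) (z : ℂ) : Summable fun j : ℕ ↦ ‖-(z * q ^ j)‖ := by
  simp only [norm_neg, norm_mul, norm_pow]
  exact (summable_geometric_of_lt_one (norm_nonneg _) hq).mul_left _

lemma multipliable_qPochInf {q : ℂ} (hq : ‖q‖ < 1) (z : ℂ) :
    Multipliable fun j : ℕ ↦ 1 - z * q ^ j := by
  simpa only [sub_eq_add_neg] using multipliable_one_add_of_summable (summable_norm_mul_pow hq z)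

lemma qPochInf_ne_zero {q z : ℂ} (hq : ‖q‖ < 1) (hz : ‖z‖ < 1) : qPochInf q z ≠ 0 := by
  have h := tprod_one_add_ne_zero_of_summable (f := fun j : ℕ ↦ -(z * q ^ j))
    (fun j ↦ by simpa only [sub_eq_add_neg] using one_sub_mul_pow_ne_zero hq hz j)
    (summable_norm_mul_pow hq z)
  simpa only [qPochInf, sub_eq_add_neg] using h

lemma qPochInf_eq {q : ℂ} (hq : ‖q‖ < 1) (z : ℂ) :
    qPochInf q z = (1 - z) * qPochInf q (q * z) := by
  have h := tprod_eq_zero_mul' (f := fun j : ℕ ↦ 1 - z * q ^ j)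
    ((multipliable_qPochInf hq (q * z)).congr fun j ↦ by ring)
  rw [qPochInf, h, qPochInf, pow_zero, mul_one]
  congr 1
  exact tprod_congr fun j ↦ by ring

lemma differentiable_qPochInf {q : ℂ} (hq : ‖q‖ < 1) : Differentiable ℂ (qPochInf q) := by
  rw [← differentiableOn_univ]
  have h : HasProdLocallyUniformlyOn (fun (j : ℕ) (z : ℂ) ↦ 1 - z * q ^ j) (qPochInf q) Set.univ := by
    simp_rw [sub_eq_add_neg]
    refine hasProdLocallyUniformlyOn_of_forall_compact isOpen_univ fun K _ hK ↦ ?_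
    obtain ⟨R, hR⟩ := hK.isBounded.exists_norm_le
    have := ((summable_geometric_of_lt_one (norm_nonneg q) hq).mul_left
      R).hasProdUniformlyOn_nat_one_add (f := fun (j : ℕ) (z : ℂ) ↦ -(z * q ^ j)) hK
      (.of_forall fun j z hz ↦ by
        rw [norm_neg, norm_mul, norm_pow]
        exact mul_le_mul_of_nonneg_right (hR z hz) (by positivity)) (fun _ ↦ by fun_prop)
    have e : qPochInf q = fun z ↦ ∏' j : ℕ, (1 + -(z * q ^ j)) := by
      ext z
      simp only [qPochInf, sub_eq_add_neg]
    rw [e]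
    exact this
  exact h.differentiableOn (.of_forall fun _ ↦ by
    simpa [Finset.prod_fn] using DifferentiableOn.finsetProd (fun _ _ ↦ by fun_prop)) isOpen_univ

/-- The truncated theta function as a quotient of infinite `q`-Pochhammer symbols. -/
def thetaWeight (q t X : ℂ) : ℂ :=
  qPochInf q (X ^ 2) * qPochInf q (q * X⁻¹ ^ 2) /
    (qPochInf q (t * X ^ 2) * qPochInf q (q * (t * X⁻¹ ^ 2)))

/-- A weight invariant under `X ↦ X⁻¹` that divides the truncated theta function. -/
def symmWeight (q t X : ℂ) : ℂ :=
  qPochInf q (q * X ^ 2) * qPochInf q (q * X⁻¹ ^ 2) /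
    (qPochInf q (t * X ^ 2) * qPochInf q (t * X⁻¹ ^ 2))

lemma muA1_eq_thetaWeight {q : ℝ} {t X : ℂ} (hq : ‖(q : ℂ)‖ < 1) (ht : ‖t‖ < 1) (hX : ‖X‖ = 1) :
    muA1 q t X = thetaWeight q t X := by
  have h₁ : ‖t * X ^ 2‖ < 1 := by simpa [hX] using ht
  have h₂ : ‖t * X⁻¹ ^ 2‖ < 1 := by simpa [hX] using ht
  have h₃ : ‖(q : ℂ) * (t * X⁻¹ ^ 2)‖ < 1 := by
    simpa [mul_comm] using norm_mul_pow_lt_one hq h₂ 1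
  have hn := (multipliable_qPochInf hq (X ^ 2)).hasProd.mul
    (multipliable_qPochInf hq (q * X⁻¹ ^ 2)).hasProd
  have hd := (multipliable_qPochInf hq (t * X ^ 2)).hasProd.mul
    (multipliable_qPochInf hq (q * (t * X⁻¹ ^ 2))).hasProd
  refine Eq.trans (tprod_congr fun j ↦ ?_) (hn.div₀ hd
    (mul_ne_zero (qPochInf_ne_zero hq h₁) (qPochInf_ne_zero hq h₃))).tprod_eq
  ring

lemma symmWeight_inv (q t X : ℂ) : symmWeight q t X⁻¹ = symmWeight q t X := by
  simp only [symmWeight, inv_inv]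
  ring

lemma thetaWeight_mul_eq_inv {p q : ℂ} (hp : p ≠ 0) (hpq : p ^ 2 = q) (t X : ℂ) :
    thetaWeight q t (p * X) = thetaWeight q t X⁻¹ := by
  have h : q * (p⁻¹ ^ 2 * X⁻¹ ^ 2) = X⁻¹ ^ 2 := by rw [← hpq]; field_simp
  have h' : q * (t * (p⁻¹ ^ 2 * X⁻¹ ^ 2)) = t * X⁻¹ ^ 2 := by rw [← hpq]; field_simp
  rw [thetaWeight, thetaWeight, mul_inv, mul_pow, mul_pow, hpq, h, h', inv_inv,
    mul_left_comm t q]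
  ring

lemma thetaWeight_eq_symmWeight {q t X : ℂ} (hq : ‖q‖ < 1) (ht : ‖t‖ < 1) (hX : ‖X‖ = 1) :
    thetaWeight q t X = (1 - X ^ 2) * (1 - t * X⁻¹ ^ 2) * symmWeight q t X := by
  have h : ‖t * X⁻¹ ^ 2‖ < 1 := by simpa [hX] using ht
  have h₀ := one_sub_ne_zero_of_norm_lt_one h
  rw [thetaWeight, symmWeight, qPochInf_eq hq (X ^ 2), qPochInf_eq hq (t * X⁻¹ ^ 2)]
  generalize 1 - t * X⁻¹ ^ 2 = u at *
  rw [show ∀ a b c d e : ℂ, a * u * (b * c / (d * (u * e))) = u * (a * b * c) / (u * (d * e)) by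
    intros; ring, mul_div_mul_left _ _ h₀]

lemma differentiableAt_thetaWeight {q t X : ℂ} (hq : ‖q‖ < 1) (ht : ‖t‖ < 1)
    (hX : ‖X‖ ≤ 1) (hqX : ‖q‖ ≤ ‖X‖ ^ 2) (hX0 : X ≠ 0) :
    DifferentiableAt ℂ (thetaWeight q t) X := by
  have hX2 : 0 < ‖X‖ ^ 2 := by positivity
  have h₁ : ‖t * X ^ 2‖ < 1 := by
    rw [norm_mul, norm_pow]
    exact (mul_le_of_le_one_right (norm_nonneg _) (pow_le_one₀ (norm_nonneg _) hX)).trans_lt ht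
  have h₂ : ‖q * (t * X⁻¹ ^ 2)‖ < 1 := by
    rw [mul_left_comm, norm_mul]
    refine (mul_le_of_le_one_right (norm_nonneg _) ?_).trans_lt ht
    rw [norm_mul, norm_pow, norm_inv, inv_pow, ← div_eq_mul_inv]
    exact div_le_one_of_le₀ hqX hX2.le
  have hd := differentiable_qPochInf hq
  have h₃ := mul_ne_zero (qPochInf_ne_zero hq h₁) (qPochInf_ne_zero hq h₂)
  unfold thetaWeight
  fun_prop (disch := assumption)

lemma differentiableAt_rogersC (q t : ℂ) (n : ℕ) {X : ℂ} (hX : X ≠ 0) :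
    DifferentiableAt ℂ (rogersC q t n) X := by
  unfold rogersC
  fun_prop (disch := assumption)

end Weight

section UnitCircleIntegral

/-- The integral `∫₀^{2π} F(e^{iφ}) dφ`. -/
def unitCircleIntegral (F : ℂ → ℂ) : ℂ :=
  ∫ φ : ℝ in (0:ℝ)..(2 * Real.pi), F (Complex.exp (Complex.I * (φ : ℂ)))

lemma norm_exp_I_mul (φ : ℝ) : ‖Complex.exp (Complex.I * (φ : ℂ))‖ = 1 := by
  rw [mul_comm, Complex.norm_exp_ofReal_mul_I]

lemma unitCircleIntegral_congr {F G : ℂ → ℂ} (h : ∀ X : ℂ, ‖X‖ = 1 → F X = G X) :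
    unitCircleIntegral F = unitCircleIntegral G := by
  unfold unitCircleIntegral
  congr 1
  ext φ
  exact h _ (norm_exp_I_mul φ)

lemma unitCircleIntegral_const_mul (c : ℂ) (F : ℂ → ℂ) :
    unitCircleIntegral (fun X ↦ c * F X) = c * unitCircleIntegral F :=
  intervalIntegral.integral_const_mul _ _

lemma intervalIntegrable_circle {F : ℂ → ℂ} (hF : ∀ X : ℂ, ‖X‖ = 1 → ContinuousAt F X) :
    IntervalIntegrable (fun φ : ℝ ↦ F (Complex.exp (Complex.I * (φ : ℂ)))) MeasureTheory.volume
      0 (2 * Real.pi) := by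
  refine Continuous.intervalIntegrable (continuous_iff_continuousAt.mpr fun φ ↦ ?_) _ _
  exact ContinuousAt.comp (f := fun φ : ℝ ↦ Complex.exp (Complex.I * (φ : ℂ)))
    (hF _ (norm_exp_I_mul φ)) (by fun_prop)

lemma unitCircleIntegral_add {F G : ℂ → ℂ} (hF : ∀ X : ℂ, ‖X‖ = 1 → ContinuousAt F X)
    (hG : ∀ X : ℂ, ‖X‖ = 1 → ContinuousAt G X) :
    unitCircleIntegral (fun X ↦ F X + G X) = unitCircleIntegral F + unitCircleIntegral G :=
  intervalIntegral.integral_add (intervalIntegrable_circle hF) (intervalIntegrable_circle hG)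

lemma unitCircleIntegral_inv (F : ℂ → ℂ) : unitCircleIntegral (fun X ↦ F X⁻¹) = unitCircleIntegral F := by
  have h := intervalIntegral.integral_comp_sub_left (a := 0) (b := 2 * Real.pi)
    (fun φ : ℝ ↦ F (Complex.exp (Complex.I * (φ : ℂ)))) (2 * Real.pi)
  rw [sub_self, sub_zero] at h
  unfold unitCircleIntegral
  rw [← h]
  congr 1
  ext φ
  refine congrArg F ?_
  rw [← Complex.exp_neg, Complex.exp_eq_exp_iff_exists_int]
  exact ⟨-1, by push_cast; ring⟩

lemma unitCircleIntegral_symmetrize {F : ℂ → ℂ} (hF : ∀ X : ℂ, ‖X‖ = 1 → ContinuousAt F X) :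
    unitCircleIntegral (fun X ↦ F X + F X⁻¹) = 2 * unitCircleIntegral F := by
  rw [unitCircleIntegral_add hF, unitCircleIntegral_inv, two_mul]
  intro X hX
  have hX0 : X ≠ 0 := by rintro rfl; simp at hX
  exact ContinuousAt.comp (f := fun X : ℂ ↦ X⁻¹) (hF _ (by simp [hX])) (continuousAt_inv₀ hX0)

/-- Contour shift: the angular integrals over `|X| = r` and `|X| = 1` agree. -/
lemma unitCircleIntegral_radius {F : ℂ → ℂ} {r : ℝ} (hr0 : 0 < r) (hr1 : r ≤ 1)
    (hF : ∀ X : ℂ, r ≤ ‖X‖ → ‖X‖ ≤ 1 → DifferentiableAt ℂ F X) :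
    unitCircleIntegral (fun X ↦ F (r * X)) = unitCircleIntegral F := by
  have key (R : ℝ) (hR : 0 < R) : (∮ z in C(0, R), (z - 0)⁻¹ • F z) =
      Complex.I * unitCircleIntegral (fun X ↦ F (R * X)) := by
    rw [circleIntegral, unitCircleIntegral, ← intervalIntegral.integral_const_mul]
    congr 1
    ext φ
    have hR' : (R : ℂ) ≠ 0 := by exact_mod_cast hR.ne'
    have he := Complex.exp_ne_zero (φ * Complex.I)
    simp only [deriv_circleMap, circleMap, zero_add, sub_zero, smul_eq_mul, mul_comm Complex.I (φ : ℂ)]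
    field_simp
  have h := Complex.circleIntegral_sub_center_inv_smul_eq_of_differentiable_on_annulus_off_countable
    (c := 0) hr0 hr1 (f := F) Set.countable_empty
    (fun z hz ↦ (hF z (by simpa using hz.2)
      (by simpa using hz.1)).continuousAt.continuousWithinAt)
    (fun z hz ↦ by
      have h₁ := hz.1.1
      have h₂ := hz.1.2
      simp only [Metric.mem_ball, Metric.mem_closedBall, dist_zero_right, not_le] at h₁ h₂
      exact hF z h₂.le h₁.le)
  rw [key r hr0, key 1 one_pos] at h
  simpa using h.symm

end UnitCircleIntegral

section Orthogonality

lemma two_mul_unitCircleIntegral_thetaWeight {q t : ℂ} (hq : ‖q‖ < 1) (ht : ‖t‖ < 1) {h : ℂ → ℂ}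
    (hc : ∀ X : ℂ, ‖X‖ = 1 → ContinuousAt h X) (hs : ∀ X, h X⁻¹ = h X) :
    2 * unitCircleIntegral (fun X ↦ h X * thetaWeight q t X) =
      (1 + t) * unitCircleIntegral (fun X ↦ (1 - X ^ 2) * (1 - X⁻¹ ^ 2) * h X * symmWeight q t X) := by
  rw [← unitCircleIntegral_symmetrize, ← unitCircleIntegral_const_mul]
  · refine unitCircleIntegral_congr fun X hX ↦ ?_
    have hX0 : X ≠ 0 := by rintro rfl; simp at hX
    have hX2 : X ^ 2 * X⁻¹ ^ 2 = 1 := by rw [← mul_pow, mul_inv_cancel₀ hX0, one_pow]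
    rw [hs, thetaWeight_eq_symmWeight hq ht hX,
      thetaWeight_eq_symmWeight hq ht (by simpa using hX), symmWeight_inv, inv_inv]
    linear_combination h X * symmWeight q t X * (t - 1) * hX2
  · intro X hX
    have hX0 : X ≠ 0 := by rintro rfl; simp at hX
    exact (hc X hX).mul (differentiableAt_thetaWeight hq ht hX.le (by simpa [hX] using hq.le)
      hX0).continuousAt

lemma continuousAt_rogersC (q t : ℂ) (n : ℕ) {X : ℂ} (hX : ‖X‖ = 1) :
    ContinuousAt (rogersC q t n) X :=
  (differentiableAt_rogersC q t n (by rintro rfl; simp at hX)).continuousAt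

variable {p : ℝ} {t : ℂ}

/-- Self-adjointness of the `q`-shift with respect to the truncated theta weight. -/
lemma unitCircleIntegral_shift_comm (hp0 : 0 < p) (hp1 : p < 1) (ht : ‖t‖ < 1) (m n : ℕ) :
    unitCircleIntegral (fun X ↦ thetaWeight ((p : ℂ) ^ 2) t (p * X) * rogersC ((p : ℂ) ^ 2) t m (p * X) *
      rogersC ((p : ℂ) ^ 2) t n X) =
    unitCircleIntegral (fun X ↦ thetaWeight ((p : ℂ) ^ 2) t (p * X) * rogersC ((p : ℂ) ^ 2) t n (p * X) *
      rogersC ((p : ℂ) ^ 2) t m X) := by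
  have hp : (p : ℂ) ≠ 0 := by exact_mod_cast hp0.ne'
  have hnp : ‖(p : ℂ)‖ = p := by simp [abs_of_pos hp0]
  have hq : ‖(p : ℂ) ^ 2‖ < 1 := by
    rw [norm_pow, hnp]
    exact pow_lt_one₀ hp0.le hp1 two_ne_zero
  let F : ℂ → ℂ := fun X ↦ thetaWeight ((p : ℂ) ^ 2) t X * rogersC ((p : ℂ) ^ 2) t m X *
    rogersC ((p : ℂ) ^ 2) t n (X / p)
  have hF : ∀ X : ℂ, p ≤ ‖X‖ → ‖X‖ ≤ 1 → DifferentiableAt ℂ F X := by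
    intro X h₁ h₂
    have hX0 : X ≠ 0 := norm_pos_iff.mp (hp0.trans_le h₁)
    have hq' : ‖(p : ℂ) ^ 2‖ ≤ ‖X‖ ^ 2 := by
      rw [norm_pow, hnp]
      exact pow_le_pow_left₀ hp0.le h₁ 2
    have hn : DifferentiableAt ℂ (fun Y : ℂ ↦ rogersC ((p : ℂ) ^ 2) t n (Y / p)) X :=
      DifferentiableAt.comp (g := rogersC ((p : ℂ) ^ 2) t n) X
        (differentiableAt_rogersC _ t n (div_ne_zero hX0 hp)) (differentiableAt_id.div_const _)
    exact ((differentiableAt_thetaWeight hq ht h₂ hq' hX0).mul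
      (differentiableAt_rogersC _ t m hX0)).mul hn
  have h := (unitCircleIntegral_radius hp0 hp1.le hF).trans (unitCircleIntegral_inv F).symm
  refine Eq.trans ?_ (h.trans ?_)
  · refine unitCircleIntegral_congr fun X _ ↦ ?_
    simp only [F, mul_div_cancel_left₀ X hp]
  · refine unitCircleIntegral_congr fun X _ ↦ ?_
    simp only [F]
    rw [rogersC_inv, thetaWeight_mul_eq_inv hp rfl,
      show X⁻¹ / (p : ℂ) = (p * X)⁻¹ by rw [mul_inv, div_eq_mul_inv, mul_comm], rogersC_inv]
    ring

lemma unitCircleIntegral_shift_eq (hp0 : 0 < p) (hp1 : p < 1) (ht : ‖t‖ < 1) (m n : ℕ) :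
    (1 + t) * unitCircleIntegral (fun X ↦ thetaWeight ((p : ℂ) ^ 2) t (p * X) *
      rogersC ((p : ℂ) ^ 2) t m (p * X) * rogersC ((p : ℂ) ^ 2) t n X) =
    (t * p ^ m + (p : ℂ)⁻¹ ^ m) * unitCircleIntegral (fun X ↦ rogersC ((p : ℂ) ^ 2) t m X *
      rogersC ((p : ℂ) ^ 2) t n X * thetaWeight ((p : ℂ) ^ 2) t X) := by
  have hp : (p : ℂ) ≠ 0 := by exact_mod_cast hp0.ne'
  have hnp : ‖(p : ℂ)‖ = p := by simp [abs_of_pos hp0]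
  have hq : ‖(p : ℂ) ^ 2‖ < 1 := by
    rw [norm_pow, hnp]
    exact pow_lt_one₀ hp0.le hp1 two_ne_zero
  have h₁ := two_mul_unitCircleIntegral_thetaWeight hq ht
    (h := fun X ↦ rogersC ((p : ℂ) ^ 2) t m X * rogersC ((p : ℂ) ^ 2) t n X)
    (fun X hX ↦ (continuousAt_rogersC _ t m hX).mul (continuousAt_rogersC _ t n hX))
    (fun X ↦ by simp only [rogersC_inv])
  refine mul_left_cancel₀ (two_ne_zero (α := ℂ)) ?_
  rw [mul_left_comm 2 (t * _ + _), h₁, mul_left_comm 2 (1 + t), mul_left_comm _ (1 + t),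
    ← unitCircleIntegral_symmetrize]
  · simp only [← unitCircleIntegral_const_mul]
    refine unitCircleIntegral_congr fun X hX ↦ ?_
    have hX0 : X ≠ 0 := by rintro rfl; simp at hX
    have hX' : ‖X⁻¹‖ = 1 := by simpa using hX
    rw [thetaWeight_mul_eq_inv hp rfl, thetaWeight_mul_eq_inv hp rfl,
      thetaWeight_eq_symmWeight hq ht hX', inv_inv, thetaWeight_eq_symmWeight hq ht hX,
      symmWeight_inv, rogersC_inv, ← rogersC_inv _ t m (p * X⁻¹),
      show ((p : ℂ) * X⁻¹)⁻¹ = X / p by rw [mul_inv, inv_inv, div_eq_mul_inv, mul_comm]]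
    linear_combination (1 + t) * symmWeight ((p : ℂ) ^ 2) t X * rogersC ((p : ℂ) ^ 2) t n X *
      rogersC_eigen t hp rfl hq hX0 m
  · intro X hX
    have hX0 : X ≠ 0 := by rintro rfl; simp at hX
    have hpX : ‖(p : ℂ) * X‖ = p := by rw [norm_mul, hnp, hX, mul_one]
    have hpX0 := mul_ne_zero hp hX0
    refine DifferentiableAt.continuousAt (𝕜 := ℂ) ?_
    have hm : DifferentiableAt ℂ (fun X : ℂ ↦ (p : ℂ) * X) X := by fun_prop
    exact ((DifferentiableAt.comp X (differentiableAt_thetaWeight hq ht (hpX.trans_le hp1.le)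
      (by rw [hpX, norm_pow, hnp]) hpX0) hm).mul
      (DifferentiableAt.comp X (differentiableAt_rogersC _ t m hpX0) hm)).mul
      (differentiableAt_rogersC _ t n hX0)

lemma eigenvalue_ne (hp0 : 0 < p) (hp1 : p < 1) (ht : ‖t‖ < 1) {m n : ℕ} (hmn : m ≠ n) :
    t * p ^ m + (p : ℂ)⁻¹ ^ m - (t * p ^ n + (p : ℂ)⁻¹ ^ n) ≠ 0 := by
  have hp : (p : ℂ) ≠ 0 := by exact_mod_cast hp0.ne'
  have hnp : ‖(p : ℂ)‖ = p := by simp [abs_of_pos hp0]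
  have h₁ : (p : ℂ) ^ m - p ^ n ≠ 0 := by
    rw [sub_ne_zero]
    exact_mod_cast fun h ↦ hmn (pow_right_injective₀ hp0 hp1.ne h)
  have h₂ := one_sub_mul_pow_ne_zero (q := p) (hnp.trans_lt hp1) ht (m + n)
  intro h
  refine mul_ne_zero h₁ h₂ ?_
  rw [inv_pow, inv_pow] at h
  field_simp at h
  linear_combination -h

/-- Orthogonality of the Rogers polynomials. -/
lemma unitCircleIntegral_rogersC_mul_of_ne (hp0 : 0 < p) (hp1 : p < 1) (ht : ‖t‖ < 1) {m n : ℕ}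
    (hmn : m ≠ n) :
    unitCircleIntegral (fun X ↦ rogersC ((p : ℂ) ^ 2) t m X * rogersC ((p : ℂ) ^ 2) t n X *
      thetaWeight ((p : ℂ) ^ 2) t X) = 0 := by
  have h₁ := unitCircleIntegral_shift_eq hp0 hp1 ht m n
  have h₂ := unitCircleIntegral_shift_eq hp0 hp1 ht n m
  rw [unitCircleIntegral_shift_comm hp0 hp1 ht, h₂] at h₁
  simp only [mul_comm (rogersC ((p : ℂ) ^ 2) t n _)] at h₁
  refine (mul_eq_zero.mp ?_).resolve_left (eigenvalue_ne hp0 hp1 ht hmn)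
  linear_combination -h₁

lemma exists_rogersC_succ_rec {q : ℂ} (t : ℂ) (hq : ‖q‖ < 1) (n : ℕ) :
    ∃ (D : ℂ) (k : ℕ), k < n + 1 ∧ ∀ X : ℂ, X ≠ 0 → (1 - q ^ (n + 1)) * rogersC q t (n + 1) X =
      (1 - t * q ^ n) * (X + X⁻¹) * rogersC q t n X - D * rogersC q t k X := by
  cases n with
  | zero => exact ⟨0, 0, by simp, fun X _ ↦ by simpa using rogersC_one_rec t hq⟩
  | succ n => exact ⟨1 - t ^ 2 * q ^ n, n, by omega, fun X hX ↦ rogersC_add_two_rec t hq hX n⟩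

lemma unitCircleIntegral_linear_comb {F G : ℂ → ℂ} (a b : ℂ) (hF : ∀ X : ℂ, ‖X‖ = 1 → ContinuousAt F X)
    (hG : ∀ X : ℂ, ‖X‖ = 1 → ContinuousAt G X) :
    unitCircleIntegral (fun X ↦ a * F X + b * G X) = a * unitCircleIntegral F + b * unitCircleIntegral G := by
  rw [unitCircleIntegral_add (F := fun X ↦ a * F X) (G := fun X ↦ b * G X)
    (fun X hX ↦ continuousAt_const.mul (hF X hX)) (fun X hX ↦ continuousAt_const.mul (hG X hX)),
    unitCircleIntegral_const_mul, unitCircleIntegral_const_mul]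

lemma unitCircleIntegral_rogersC_sq_succ (hp0 : 0 < p) (hp1 : p < 1) (ht : ‖t‖ < 1) (n : ℕ) :
    (1 - t * ((p : ℂ) ^ 2) ^ (n + 1)) * (1 - ((p : ℂ) ^ 2) ^ (n + 1)) *
      unitCircleIntegral (fun X ↦ rogersC ((p : ℂ) ^ 2) t (n + 1) X * rogersC ((p : ℂ) ^ 2) t (n + 1) X *
        thetaWeight ((p : ℂ) ^ 2) t X) =
    (1 - t * ((p : ℂ) ^ 2) ^ n) * (1 - t ^ 2 * ((p : ℂ) ^ 2) ^ n) *
      unitCircleIntegral (fun X ↦ rogersC ((p : ℂ) ^ 2) t n X * rogersC ((p : ℂ) ^ 2) t n X *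
        thetaWeight ((p : ℂ) ^ 2) t X) := by
  have hnp : ‖(p : ℂ)‖ = p := by simp [abs_of_pos hp0]
  have hq : ‖(p : ℂ) ^ 2‖ < 1 := by
    rw [norm_pow, hnp]
    exact pow_lt_one₀ hp0.le hp1 two_ne_zero
  have orth := fun {m n : ℕ} (h : m ≠ n) ↦ unitCircleIntegral_rogersC_mul_of_ne hp0 hp1 ht h
  generalize (p : ℂ) ^ 2 = q at *
  have hc (m n : ℕ) (X : ℂ) (hX : ‖X‖ = 1) :
      ContinuousAt (fun X ↦ rogersC q t m X * rogersC q t n X * thetaWeight q t X) X :=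
    ((continuousAt_rogersC q t m hX).mul (continuousAt_rogersC q t n hX)).mul
      (differentiableAt_thetaWeight hq ht hX.le (by simpa [hX] using hq.le)
        (by rintro rfl; simp at hX)).continuousAt
  have h₁ : (1 - q ^ (n + 1)) * unitCircleIntegral (fun X ↦ rogersC q t (n + 1) X *
      rogersC q t (n + 1) X * thetaWeight q t X) = (1 - t * q ^ n) * unitCircleIntegral (fun X ↦
      (X + X⁻¹) * (rogersC q t (n + 1) X * rogersC q t n X * thetaWeight q t X)) := by
    obtain ⟨D, k, hk, hD⟩ := exists_rogersC_succ_rec t hq n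
    have h := unitCircleIntegral_linear_comb (1 - q ^ (n + 1)) D (hc (n + 1) (n + 1)) (hc (n + 1) k)
    rw [orth hk.ne', mul_zero, add_zero] at h
    rw [← h, ← unitCircleIntegral_const_mul]
    refine unitCircleIntegral_congr fun X hX ↦ ?_
    linear_combination rogersC q t (n + 1) X * thetaWeight q t X *
      hD X (by rintro rfl; simp at hX)
  have h₂ : (1 - t * q ^ (n + 1)) * unitCircleIntegral (fun X ↦
      (X + X⁻¹) * (rogersC q t (n + 1) X * rogersC q t n X * thetaWeight q t X)) =
      (1 - t ^ 2 * q ^ n) * unitCircleIntegral (fun X ↦ rogersC q t n X * rogersC q t n X *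
        thetaWeight q t X) := by
    have h := unitCircleIntegral_linear_comb (1 - t ^ 2 * q ^ n) (1 - q ^ (n + 2)) (hc n n) (hc (n + 2) n)
    rw [orth (by omega : n + 2 ≠ n), mul_zero, add_zero] at h
    rw [← h, ← unitCircleIntegral_const_mul]
    refine unitCircleIntegral_congr fun X hX ↦ ?_
    have hX0 : X ≠ 0 := by rintro rfl; simp at hX
    linear_combination -rogersC q t n X * thetaWeight q t X * rogersC_add_two_rec t hq hX0 n
  linear_combination (1 - t * q ^ (n + 1)) * h₁ + (1 - t * q ^ n) * h₂

lemma unitCircleIntegral_rogersC_sq (hp0 : 0 < p) (hp1 : p < 1) (ht : ‖t‖ < 1) (n : ℕ) :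
    unitCircleIntegral (fun X ↦ rogersC ((p : ℂ) ^ 2) t n X * rogersC ((p : ℂ) ^ 2) t n X *
        thetaWeight ((p : ℂ) ^ 2) t X) =
    qBinomCoeff ((p : ℂ) ^ 2) t n ^ 2 * (∏ j ∈ Finset.range n,
      ((1 - ((p : ℂ) ^ 2) ^ (j + 1)) * (1 - t ^ 2 * ((p : ℂ) ^ 2) ^ j)) /
      ((1 - t * ((p : ℂ) ^ 2) ^ (j + 1)) * (1 - t * ((p : ℂ) ^ 2) ^ j))) *
      unitCircleIntegral (thetaWeight ((p : ℂ) ^ 2) t) := by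
  induction n with
  | zero => simp [rogersC_zero, qBinomCoeff_zero]
  | succ n ih =>
    have hq : ‖(p : ℂ) ^ 2‖ < 1 := by
      simpa [abs_of_pos hp0] using pow_lt_one₀ hp0.le hp1 two_ne_zero
    have h := unitCircleIntegral_rogersC_sq_succ hp0 hp1 ht n
    rw [ih] at h
    rw [Finset.prod_range_succ]
    have s := qBinomCoeff_succ t hq n
    have h₁ := one_sub_mul_pow_ne_zero hq ht n
    have h₂ := one_sub_mul_pow_ne_zero hq ht (n + 1)
    have h₃ := one_sub_pow_succ_ne_zero hq n
    refine mul_left_cancel₀ (mul_ne_zero h₂ h₃) (h.trans ?_)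
    rw [show qBinomCoeff ((p : ℂ) ^ 2) t (n + 1) = (1 - t * ((p : ℂ) ^ 2) ^ n) *
      qBinomCoeff ((p : ℂ) ^ 2) t n / (1 - ((p : ℂ) ^ 2) ^ (n + 1)) by
        rw [eq_div_iff h₃, mul_comm, s]]
    generalize 1 - t * ((p : ℂ) ^ 2) ^ n = a at *
    generalize 1 - t * ((p : ℂ) ^ 2) ^ (n + 1) = b at *
    generalize 1 - ((p : ℂ) ^ 2) ^ (n + 1) = c at *
    field_simp

end Orthogonality

/-- orthogonality and norm formula for the Rogers polynomials of type A₁. -/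
theorem rogersA1_orthogonality (q : ℝ) (hq0 : 0 < q) (hq1 : q < 1)
    (t : ℂ) (ht : ‖t‖ < 1) (m n : ℕ) :
    (1 / (2 * (Real.pi : ℂ))) *
      ∫ φ : ℝ in (0:ℝ)..(2 * Real.pi),
        RogersA1 q t m (Complex.exp (Complex.I * (φ : ℂ))) *
          RogersA1 q t n (Complex.exp (Complex.I * (φ : ℂ))) *
          muA1 q t (Complex.exp (Complex.I * (φ : ℂ))) =
    (if m = n then
        ∏ j ∈ Finset.range n,
          ((1 - (q : ℂ) ^ (j + 1)) * (1 - t ^ 2 * (q : ℂ) ^ j)) /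
          ((1 - t * (q : ℂ) ^ (j + 1)) * (1 - t * (q : ℂ) ^ j))
      else 0) *
      ((1 / (2 * (Real.pi : ℂ))) *
        ∫ φ : ℝ in (0:ℝ)..(2 * Real.pi), muA1 q t (Complex.exp (Complex.I * (φ : ℂ)))) := by
  have hp0 : 0 < √q := Real.sqrt_pos.mpr hq0
  have hp1 : √q < 1 := by rwa [Real.sqrt_lt' one_pos, one_pow]
  have hpq : (q : ℂ) = ((√q : ℝ) : ℂ) ^ 2 := by
    rw [← Complex.ofReal_pow, Real.sq_sqrt hq0.le]
  have hq : ‖(q : ℂ)‖ < 1 := by simpa [abs_of_pos hq0] using hq1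
  have hm := qBinomCoeff_ne_zero hq ht m
  have hn := qBinomCoeff_ne_zero hq ht n
  have hμ : unitCircleIntegral (muA1 q t) = unitCircleIntegral (thetaWeight q t) :=
    unitCircleIntegral_congr fun X hX ↦ muA1_eq_thetaWeight hq ht hX
  have hP : qBinomCoeff q t m * qBinomCoeff q t n *
      unitCircleIntegral (fun X ↦ RogersA1 q t m X * RogersA1 q t n X * muA1 q t X) =
      unitCircleIntegral (fun X ↦ rogersC q t m X * rogersC q t n X * thetaWeight q t X) := by
    rw [← unitCircleIntegral_const_mul]
    refine unitCircleIntegral_congr fun X hX ↦ ?_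
    have hX0 : X ≠ 0 := by rintro rfl; simp at hX
    rw [muA1_eq_thetaWeight hq ht hX, ← RogersA1_mul_qBinomCoeff hq ht hX0,
      ← RogersA1_mul_qBinomCoeff hq ht hX0]
    ring
  change _ * unitCircleIntegral (fun X ↦ RogersA1 q t m X * RogersA1 q t n X * muA1 q t X) =
    _ * (_ * unitCircleIntegral (muA1 q t))
  rw [hμ, mul_left_comm]
  congr 1
  refine mul_left_cancel₀ (mul_ne_zero hm hn) (hP.trans ?_)
  split_ifs with h
  · subst h
    rw [hpq, unitCircleIntegral_rogersC_sq hp0 hp1 ht]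
    ring
  · rw [hpq, unitCircleIntegral_rogersC_mul_of_ne hp0 hp1 ht h, zero_mul, mul_zero]

end
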